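/- arXiv:2409.19936 — 4 statements merged into one kernel-verified Lean document; each statement's English description precedes it below -/
import Mathlib

section
/- Let F ∈ ℝ^{n×n}, G ∈ ℝ^{n×m}, let P, Q ∈ ℝ^{n×n} be symmetric with Q positive semidefinite, and let R ∈ ℝ^{m×m} be symmetric positive definite. Suppose P satisfies the continuous-time algebraic Riccati equation FᵀP + PF + Q − PGR⁻¹GᵀP = 0. Then for every η ∈ ℝⁿ, √((ηᵀ(FᵀP + PF)η)² + 4(ηᵀQη)(ηᵀPGR⁻¹GᵀPη)) = ηᵀ(Q + PGR⁻¹GᵀP)η. -/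
open Matrix

/-- Simplification of the decay-rate function `W(η)` (Eq. (11) of the paper):
if `P` solves the continuous-time algebraic Riccati equation
`FᵀP + PF + Q − PGR⁻¹GᵀP = 0` with `Q ⪰ 0` and `R ≻ 0`, then for all `η`,
`√((ηᵀ(FᵀP+PF)η)² + 4(ηᵀQη)(ηᵀPGR⁻¹GᵀPη)) = ηᵀ(Q + PGR⁻¹GᵀP)η`. -/
theorem decay_rate_simplification
    {n m : ℕ}
    (F P Q : Matrix (Fin n) (Fin n) ℝ)
    (G : Matrix (Fin n) (Fin m) ℝ)
    (R : Matrix (Fin m) (Fin m) ℝ)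
    (hP : P.IsSymm) (hQsymm : Q.IsSymm) (hQ : Q.PosSemidef) (hR : R.PosDef)
    (hRic : Fᵀ * P + P * F + Q - P * G * R⁻¹ * Gᵀ * P = 0) :
    ∀ η : Fin n → ℝ,
      Real.sqrt ((η ⬝ᵥ ((Fᵀ * P + P * F) *ᵥ η)) ^ 2
          + 4 * (η ⬝ᵥ (Q *ᵥ η)) * (η ⬝ᵥ ((P * G * R⁻¹ * Gᵀ * P) *ᵥ η)))
        = η ⬝ᵥ ((Q + P * G * R⁻¹ * Gᵀ * P) *ᵥ η) := by
  intro η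
  have hS : (P * G * R⁻¹ * Gᵀ * P).PosSemidef := by
    have h := hR.inv.posSemidef.mul_mul_conjTranspose_same (P * G)
    have e : (P * G)ᴴ = Gᵀ * P := by
      rw [conjTranspose_eq_transpose_of_trivial, transpose_mul, hP.eq]
    rw [e, ← Matrix.mul_assoc] at h
    exact h
  have hL : Fᵀ * P + P * F = P * G * R⁻¹ * Gᵀ * P - Q := by
    rw [eq_sub_iff_add_eq]
    exact sub_eq_zero.mp hRic
  have hq : 0 ≤ η ⬝ᵥ (Q *ᵥ η) := by
    simpa using hQ.dotProduct_mulVec_nonneg η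
  have hs : 0 ≤ η ⬝ᵥ ((P * G * R⁻¹ * Gᵀ * P) *ᵥ η) := by
    simpa only [star_trivial] using hS.dotProduct_mulVec_nonneg η
  rw [hL, sub_mulVec, add_mulVec, dotProduct_sub, dotProduct_add]
  rw [← Real.sqrt_sq (add_nonneg hq hs)]
  congr 1
  ring
end

section
/- Let F ∈ ℝ^{n×n}, G ∈ ℝ^{n×m}, let P, Q ∈ ℝ^{n×n} be symmetric positive definite, and let R ∈ ℝ^{m×m} be symmetric positive definite, with FᵀP + PF + Q − PGR⁻¹GᵀP = 0. Then the closed-loop matrix A := F − GR⁻¹GᵀP is Hurwitz: every eigenvalue of A (as a complex matrix) has strictly negative real part. -/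
open Matrix

lemma lyap_hurwitz_aux {n : ℕ} (A P S : Matrix (Fin n) (Fin n) ℝ)
    (hP : P.PosDef) (hPs : P.IsSymm) (hS : S.PosDef)
    (h : Aᵀ * P + P * A = -S) (μ : ℂ)
    (hμ : μ ∈ spectrum ℂ (A.map (algebraMap ℝ ℂ))) : μ.re < 0 := by
  rw [← Matrix.spectrum_toLin', ← Module.End.hasEigenvalue_iff_mem_spectrum] at hμ
  obtain ⟨v, hv⟩ := hμ.exists_hasEigenvector
  have hv0 := hv.2
  have hve := hv.apply_eq_smul
  rw [Matrix.toLin'_apply] at hve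
  set x : Fin n → ℝ := fun i => (v i).re with hx
  set y : Fin n → ℝ := fun i => (v i).im with hy
  have hAx : A *ᵥ x = μ.re • x - μ.im • y := by
    ext i
    have := congrArg Complex.re (congrFun hve i)
    simpa [Matrix.mulVec, dotProduct, hx, hy] using this
  have hAy : A *ᵥ y = μ.re • y + μ.im • x := by
    ext i
    have := congrArg Complex.im (congrFun hve i)
    simpa [Matrix.mulVec, dotProduct, hx, hy] using this
  have hsym : ∀ u w : Fin n → ℝ, u ⬝ᵥ (P *ᵥ w) = w ⬝ᵥ (P *ᵥ u) := by
    intro u w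
    rw [Matrix.dotProduct_mulVec, ← Matrix.mulVec_transpose, hPs.eq, dotProduct_comm]
  have key : ∀ u : Fin n → ℝ, 2 * (u ⬝ᵥ (P *ᵥ (A *ᵥ u))) = - (u ⬝ᵥ (S *ᵥ u)) := by
    intro u
    have h1 : u ⬝ᵥ ((Aᵀ * P + P * A) *ᵥ u) = - (u ⬝ᵥ (S *ᵥ u)) := by
      rw [h, Matrix.neg_mulVec, dotProduct_neg]
    rw [Matrix.add_mulVec, dotProduct_add, ← Matrix.mulVec_mulVec, ← Matrix.mulVec_mulVec,
      Matrix.dotProduct_mulVec u Aᵀ, Matrix.vecMul_transpose, hsym (A *ᵥ u) u] at h1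
    linarith
  have kx := key x
  have ky := key y
  rw [hAx, Matrix.mulVec_sub, dotProduct_sub, Matrix.mulVec_smul, Matrix.mulVec_smul,
    dotProduct_smul, dotProduct_smul, smul_eq_mul, smul_eq_mul] at kx
  rw [hAy, Matrix.mulVec_add, dotProduct_add, Matrix.mulVec_smul, Matrix.mulVec_smul,
    dotProduct_smul, dotProduct_smul, smul_eq_mul, smul_eq_mul, hsym y x] at ky
  have hpos : ∀ M : Matrix (Fin n) (Fin n) ℝ, M.PosDef →
      0 < x ⬝ᵥ (M *ᵥ x) + y ⬝ᵥ (M *ᵥ y) := by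
    intro M hM
    have nn : ∀ u : Fin n → ℝ, 0 ≤ u ⬝ᵥ (M *ᵥ u) := fun u => by
      simpa using hM.posSemidef.dotProduct_mulVec_nonneg u
    have pp : ∀ u : Fin n → ℝ, u ≠ 0 → 0 < u ⬝ᵥ (M *ᵥ u) := fun u hu => by
      simpa using hM.dotProduct_mulVec_pos hu
    by_cases hx0 : x = 0
    · have hy0 : y ≠ 0 := by
        intro hy0
        apply hv0
        ext i
        exact Complex.ext (congrFun hx0 i) (congrFun hy0 i)
      linarith [nn x, pp y hy0]
    · linarith [nn y, pp x hx0]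
  have p1 := hpos P hP
  have p2 := hpos S hS
  by_contra hc
  push Not at hc
  nlinarith [mul_nonneg hc p1.le]

/-- The closed-loop matrix `A = F − GR⁻¹GᵀP` of the LQ feedback is Hurwitz:
if `P, Q ≻ 0`, `R ≻ 0` and `P` solves the continuous-time algebraic Riccati
equation `FᵀP + PF + Q − PGR⁻¹GᵀP = 0`, then every (complex) eigenvalue of
`A` has strictly negative real part. -/
theorem riccati_closed_loop_hurwitz
    {n m : ℕ}
    (F P Q : Matrix (Fin n) (Fin n) ℝ)
    (G : Matrix (Fin n) (Fin m) ℝ)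
    (R : Matrix (Fin m) (Fin m) ℝ)
    (hP : P.PosDef) (hPsymm : P.IsSymm)
    (hQ : Q.PosDef) (hQsymm : Q.IsSymm)
    (hR : R.PosDef) (hRsymm : R.IsSymm)
    (hRic : Fᵀ * P + P * F + Q - P * G * R⁻¹ * Gᵀ * P = 0) :
    ∀ μ : ℂ,
      μ ∈ spectrum ℂ ((F - G * R⁻¹ * Gᵀ * P).map (algebraMap ℝ ℂ)) →
        μ.re < 0 := by
  intro μ hμ
  have hK : (P * G * R⁻¹ * Gᵀ * P).PosSemidef := by
    have := hR.inv.posSemidef.mul_mul_conjTranspose_same (P * G)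
    simpa [Matrix.conjTranspose_eq_transpose_of_trivial, Matrix.transpose_mul, hPsymm.eq,
      Matrix.mul_assoc] using this
  refine lyap_hurwitz_aux _ P _ hP hPsymm (hQ.add_posSemidef hK) ?_ μ hμ
  have hRi : (R⁻¹)ᵀ = R⁻¹ := by rw [Matrix.transpose_nonsing_inv, hRsymm.eq]
  simp only [Matrix.transpose_sub, Matrix.transpose_mul, Matrix.transpose_transpose, hRi,
    hPsymm.eq, Matrix.sub_mul, Matrix.mul_sub, Matrix.mul_assoc] at hRic ⊢
  rw [← sub_eq_zero, ← hRic]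
  abel
end

section
/- Let F ∈ ℝ^{n×n}, G ∈ ℝ^{n×m}, let P, Q ∈ ℝ^{n×n} be symmetric positive definite, and let R ∈ ℝ^{m×m} be symmetric positive definite, with FᵀP + PF + Q − PGR⁻¹GᵀP = 0. Set c := λ_min(Q)/λ_max(P), where λ_min(Q) is the smallest eigenvalue of Q and λ_max(P) the largest eigenvalue of P. Then every solution η : [0,∞) → ℝⁿ of η̇(t) = (F − GR⁻¹GᵀP)η(t) satisfies η(t)ᵀPη(t) ≤ e^{−ct}·(η(0)ᵀPη(0)) for all t ≥ 0; in particular η(t) → 0 exponentially. -/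
open Matrix Filter

lemma lq_rayleigh {n : ℕ} (A : Matrix (Fin n) (Fin n) ℝ) (hA : A.IsHermitian) (x : Fin n → ℝ) :
    ∃ y : Fin n → ℝ, x ⬝ᵥ x = ∑ i, y i ^ 2 ∧
      x ⬝ᵥ (A *ᵥ x) = ∑ i, hA.eigenvalues i * y i ^ 2 := by
  set U : Matrix (Fin n) (Fin n) ℝ := (hA.eigenvectorUnitary : Matrix (Fin n) (Fin n) ℝ) with hU
  have hUU : U * Uᵀ = 1 := by
    have := Unitary.coe_mul_star_self hA.eigenvectorUnitary
    rwa [Unitary.coe_star, star_eq_conjTranspose, conjTranspose_eq_transpose_of_trivial] at this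
  have hsp : A = U * diagonal hA.eigenvalues * Uᵀ := by
    have := hA.spectral_theorem
    rw [Unitary.conjStarAlgAut_apply] at this
    rw [star_eq_conjTranspose, conjTranspose_eq_transpose_of_trivial] at this
    exact this
  refine ⟨Uᵀ *ᵥ x, ?_, ?_⟩
  · calc x ⬝ᵥ x = x ⬝ᵥ ((U * Uᵀ) *ᵥ x) := by rw [hUU, one_mulVec]
      _ = (Uᵀ *ᵥ x) ⬝ᵥ (Uᵀ *ᵥ x) := by
        rw [← mulVec_mulVec, dotProduct_mulVec, mulVec_transpose]
      _ = _ := by simp only [dotProduct, sq]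
  · calc x ⬝ᵥ (A *ᵥ x) = x ⬝ᵥ ((U * diagonal hA.eigenvalues * Uᵀ) *ᵥ x) := by rw [← hsp]
      _ = (Uᵀ *ᵥ x) ⬝ᵥ (diagonal hA.eigenvalues *ᵥ (Uᵀ *ᵥ x)) := by
        rw [← mulVec_mulVec, ← mulVec_mulVec, dotProduct_mulVec, ← mulVec_transpose]
      _ = _ := by
        simp only [dotProduct, mulVec_diagonal]
        exact Finset.sum_congr rfl fun i _ => by ring

lemma lq_ray_low {n : ℕ} (A : Matrix (Fin n) (Fin n) ℝ) (hA : A.IsHermitian) (x : Fin n → ℝ) :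
    (⨅ i, hA.eigenvalues i) * (x ⬝ᵥ x) ≤ x ⬝ᵥ (A *ᵥ x) := by
  obtain ⟨y, h1, h2⟩ := lq_rayleigh A hA x
  rw [h1, h2, Finset.mul_sum]
  exact Finset.sum_le_sum fun i _ => mul_le_mul_of_nonneg_right
    (ciInf_le (Set.finite_range _).bddBelow i) (sq_nonneg _)

lemma lq_ray_high {n : ℕ} (A : Matrix (Fin n) (Fin n) ℝ) (hA : A.IsHermitian) (x : Fin n → ℝ) :
    x ⬝ᵥ (A *ᵥ x) ≤ (⨆ i, hA.eigenvalues i) * (x ⬝ᵥ x) := by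
  obtain ⟨y, h1, h2⟩ := lq_rayleigh A hA x
  rw [h1, h2, Finset.mul_sum]
  exact Finset.sum_le_sum fun i _ => mul_le_mul_of_nonneg_right
    (le_ciSup (Set.finite_range _).bddAbove i) (sq_nonneg _)

lemma lq_inf_pos {n : ℕ} (hn : 0 < n) (A : Matrix (Fin n) (Fin n) ℝ) (hA : A.PosDef) :
    0 < ⨅ i, hA.1.eigenvalues i := by
  haveI : Nonempty (Fin n) := ⟨⟨0, hn⟩⟩
  obtain ⟨i, hi⟩ := exists_eq_ciInf_of_finite (f := hA.1.eigenvalues)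
  rw [← hi]
  exact hA.eigenvalues_pos i

/-- Exponential decay of the Lyapunov function along the LQ closed loop:
if `P, Q ≻ 0`, `R ≻ 0`, `P` solves the Riccati equation
`FᵀP + PF + Q − PGR⁻¹GᵀP = 0`, and `c = λ_min(Q)/λ_max(P)`, then every
solution of `η̇ = (F − GR⁻¹GᵀP)η` satisfies
`η(t)ᵀPη(t) ≤ e^{−ct} η(0)ᵀPη(0)` for all `t ≥ 0`; in particular
`η(t) → 0`. -/
theorem lq_closed_loop_exponential_decay
    {n m : ℕ} (hn : 0 < n)
    (F P Q : Matrix (Fin n) (Fin n) ℝ)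
    (G : Matrix (Fin n) (Fin m) ℝ)
    (R : Matrix (Fin m) (Fin m) ℝ)
    (hP : P.PosDef) (hPsymm : P.IsSymm)
    (hQ : Q.PosDef) (hQsymm : Q.IsSymm)
    (hR : R.PosDef) (hRsymm : R.IsSymm)
    (hRic : Fᵀ * P + P * F + Q - P * G * R⁻¹ * Gᵀ * P = 0)
    (c : ℝ)
    (hc : c = (⨅ i : Fin n, hQ.1.eigenvalues i) / (⨆ i : Fin n, hP.1.eigenvalues i))
    (η : ℝ → (Fin n → ℝ))
    (hη : ∀ t : ℝ, 0 ≤ t →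
      HasDerivAt η ((F - G * R⁻¹ * Gᵀ * P) *ᵥ η t) t) :
    (∀ t : ℝ, 0 ≤ t →
        η t ⬝ᵥ (P *ᵥ η t) ≤ Real.exp (-c * t) * (η 0 ⬝ᵥ (P *ᵥ η 0)))
      ∧ Tendsto η atTop (nhds 0) := by
  have hlQ := lq_inf_pos hn Q hQ
  have hlP := lq_inf_pos hn P hP
  have hLP : 0 < ⨆ i : Fin n, hP.1.eigenvalues i :=
    lt_of_lt_of_le (hP.eigenvalues_pos ⟨0, hn⟩) (le_ciSup (Set.finite_range _).bddAbove _)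
  have hcpos : 0 < c := by rw [hc]; exact div_pos hlQ hLP
  have hRi : (R⁻¹)ᵀ = R⁻¹ := by rw [transpose_nonsing_inv, hRsymm.eq]
  -- matrix identity
  have hmat : (F - G * R⁻¹ * Gᵀ * P)ᵀ * P + P * (F - G * R⁻¹ * Gᵀ * P)
      = -(Q + P * G * R⁻¹ * Gᵀ * P) := by
    have e : Q = P * G * R⁻¹ * Gᵀ * P - (Fᵀ * P + P * F) := by
      rw [← sub_eq_zero, ← hRic]; abel
    rw [e]
    simp only [transpose_sub, transpose_mul, transpose_transpose, hRi, hPsymm.eq,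
      Matrix.sub_mul, Matrix.mul_sub, Matrix.mul_assoc]
    abel
  -- dissipation
  have hdis : ∀ x : Fin n → ℝ,
      ((F - G * R⁻¹ * Gᵀ * P) *ᵥ x) ⬝ᵥ (P *ᵥ x) + x ⬝ᵥ (P *ᵥ ((F - G * R⁻¹ * Gᵀ * P) *ᵥ x))
        ≤ -c * (x ⬝ᵥ (P *ᵥ x)) := by
    intro x
    have e1 : ((F - G * R⁻¹ * Gᵀ * P) *ᵥ x) ⬝ᵥ (P *ᵥ x)
        + x ⬝ᵥ (P *ᵥ ((F - G * R⁻¹ * Gᵀ * P) *ᵥ x))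
        = x ⬝ᵥ (((F - G * R⁻¹ * Gᵀ * P)ᵀ * P + P * (F - G * R⁻¹ * Gᵀ * P)) *ᵥ x) := by
      rw [add_mulVec, dotProduct_add, ← mulVec_mulVec, ← mulVec_mulVec]
      congr 1
      rw [dotProduct_mulVec x, vecMul_transpose]
    have e2 : x ⬝ᵥ ((P * G * R⁻¹ * Gᵀ * P) *ᵥ x)
        = (Gᵀ *ᵥ (P *ᵥ x)) ⬝ᵥ (R⁻¹ *ᵥ (Gᵀ *ᵥ (P *ᵥ x))) := by
      simp only [← mulVec_mulVec]
      rw [dotProduct_mulVec x, dotProduct_mulVec (x ᵥ* P), ← mulVec_transpose, ← mulVec_transpose,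
        hPsymm.eq]
    have e3 : 0 ≤ x ⬝ᵥ ((P * G * R⁻¹ * Gᵀ * P) *ᵥ x) := by
      rw [e2]
      simpa using hR.inv.posSemidef.dotProduct_mulVec_nonneg (Gᵀ *ᵥ (P *ᵥ x))
    have e4 := lq_ray_low Q hQ.1 x
    have e5 := lq_ray_high P hP.1 x
    have e6 : c * (x ⬝ᵥ (P *ᵥ x)) ≤ (⨅ i : Fin n, hQ.1.eigenvalues i) * (x ⬝ᵥ x) := by
      calc c * (x ⬝ᵥ (P *ᵥ x)) ≤ c * ((⨆ i : Fin n, hP.1.eigenvalues i) * (x ⬝ᵥ x)) :=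
            mul_le_mul_of_nonneg_left e5 hcpos.le
        _ = _ := by rw [hc, ← mul_assoc, div_mul_cancel₀ _ hLP.ne']
    rw [e1, hmat, neg_mulVec, dotProduct_neg, add_mulVec, dotProduct_add]
    linarith
  -- derivative of V
  have hcomp : ∀ t : ℝ, 0 ≤ t → ∀ i, HasDerivAt (fun s => η s i)
      (((F - G * R⁻¹ * Gᵀ * P) *ᵥ η t) i) t := fun t ht => hasDerivAt_pi.1 (hη t ht)
  have hV : ∀ t : ℝ, 0 ≤ t → HasDerivAt (fun s => η s ⬝ᵥ (P *ᵥ η s))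
      (((F - G * R⁻¹ * Gᵀ * P) *ᵥ η t) ⬝ᵥ (P *ᵥ η t)
        + η t ⬝ᵥ (P *ᵥ ((F - G * R⁻¹ * Gᵀ * P) *ᵥ η t))) t := by
    intro t ht
    have h1 := hcomp t ht
    generalize (F - G * R⁻¹ * Gᵀ * P) *ᵥ η t = w at h1 ⊢
    have h2 : ∀ i, HasDerivAt (fun s => (P *ᵥ η s) i) ((P *ᵥ w) i) t := by
      intro i
      simp only [mulVec, dotProduct]
      exact HasDerivAt.fun_sum fun j _ => (h1 j).const_mul (P i j)
    have h3 := HasDerivAt.fun_sum (u := Finset.univ) fun i _ => (h1 i).mul (h2 i)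
    rw [Finset.sum_add_distrib] at h3
    exact h3
  have hmain : ∀ t : ℝ, 0 ≤ t →
      η t ⬝ᵥ (P *ᵥ η t) ≤ Real.exp (-c * t) * (η 0 ⬝ᵥ (P *ᵥ η 0)) := by
    have hE : ∀ t : ℝ, HasDerivAt (fun s => Real.exp (c * s)) (Real.exp (c * t) * c) t := by
      intro t
      simpa using ((hasDerivAt_id t).const_mul c).exp
    have hW : ∀ t : ℝ, 0 ≤ t → HasDerivAt (fun s => Real.exp (c * s) * (η s ⬝ᵥ (P *ᵥ η s))) _ t :=
      fun t ht => (hE t).mul (hV t ht)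
    have hanti : AntitoneOn (fun s => Real.exp (c * s) * (η s ⬝ᵥ (P *ᵥ η s))) (Set.Ici 0) := by
      apply antitoneOn_of_deriv_nonpos (convex_Ici 0)
      · exact fun t ht => (hW t ht).continuousAt.continuousWithinAt
      · intro t ht
        rw [interior_Ici] at ht
        exact (hW t (le_of_lt ht)).differentiableAt.differentiableWithinAt
      · intro t ht
        rw [interior_Ici] at ht
        rw [(hW t (le_of_lt ht)).deriv]
        have := mul_le_mul_of_nonneg_left (hdis (η t)) (Real.exp_pos (c * t)).le
        linarith
    intro t ht
    have h := hanti (Set.mem_Ici.2 le_rfl) (Set.mem_Ici.2 ht) ht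
    simp only [mul_zero, Real.exp_zero, one_mul] at h
    have h' := mul_le_mul_of_nonneg_left h (Real.exp_pos (-c * t)).le
    rwa [← mul_assoc, ← Real.exp_add, neg_mul, neg_add_cancel, Real.exp_zero, one_mul,
      ← neg_mul] at h'
  refine ⟨hmain, ?_⟩
  rw [tendsto_pi_nhds]
  intro i
  have hlim : Tendsto (fun t : ℝ => (⨅ i : Fin n, hP.1.eigenvalues i)⁻¹ *
      (Real.exp (-c * t) * (η 0 ⬝ᵥ (P *ᵥ η 0)))) atTop (nhds 0) := by
    have h1 : Tendsto (fun t : ℝ => Real.exp (-c * t)) atTop (nhds 0) :=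
      Real.tendsto_exp_atBot.comp (tendsto_id.const_mul_atTop_of_neg (neg_lt_zero.2 hcpos))
    simpa using (h1.mul_const (η 0 ⬝ᵥ (P *ᵥ η 0))).const_mul (⨅ i : Fin n, hP.1.eigenvalues i)⁻¹
  have hsq : Tendsto (fun t => (η t i) ^ 2) atTop (nhds 0) := by
    refine squeeze_zero' (Eventually.of_forall fun t => sq_nonneg _) ?_ hlim
    filter_upwards [eventually_ge_atTop (0 : ℝ)] with t ht
    have h1 : η t i ^ 2 ≤ η t ⬝ᵥ η t := by
      rw [sq]
      exact Finset.single_le_sum (f := fun j => η t j * η t j)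
        (fun j _ => mul_self_nonneg _) (Finset.mem_univ i)
    have h2 := (lq_ray_low P hP.1 (η t)).trans (hmain t ht)
    exact h1.trans ((le_inv_mul_iff₀ hlP).2 h2)
  have habs := hsq.sqrt
  simp only [Real.sqrt_sq_eq_abs, Real.sqrt_zero] at habs
  exact (tendsto_zero_iff_abs_tendsto_zero _).2 habs
end

section
/- Let f : ℝⁿ → ℝⁿ and g : ℝⁿ → ℝ^{n×m} be locally Lipschitz, let V : ℝⁿ → ℝ be continuously differentiable with V(0) = 0, V(x) > 0 for x ≠ 0, and V radially unbounded, let W : ℝⁿ → ℝ be continuous with W(0) = 0 and W(x) > 0 for x ≠ 0, and let ρ₀ > 0. Let u : [0,∞) → ℝᵐ be continuous and let x : [0,∞) → ℝⁿ solve ẋ(t) = f(x(t)) + g(x(t))u(t). If for all t ≥ 0, ∇V(x(t))ᵀ(f(x(t)) + g(x(t))u(t)) ≤ −ρ₀·W(x(t)) (i.e., the optimal-decay CLF constraint holds with slack δ = 0 and decay weight ρ ≥ ρ₀), then x(t) → 0 as t → ∞. -/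
open Matrix Filter

attribute [local instance] Matrix.normedAddCommGroup

/-- **Convergence under the optimal-decay CLF constraint with zero slack.**
If along the trajectory the optimal-decay CLF inequality
`∇V(x(t))ᵀ(f(x(t)) + g(x(t))u(t)) ≤ −ρ₀ W(x(t))` holds with a fixed
`ρ₀ > 0` (slack `δ = 0`, decay weight `ρ ≥ ρ₀`), then the state converges
to the origin. -/
theorem od_clf_zero_slack_convergence
    {n m : ℕ}
    (f : (Fin n → ℝ) → (Fin n → ℝ))
    (g : (Fin n → ℝ) → Matrix (Fin n) (Fin m) ℝ)
    (hf : LocallyLipschitz f) (hg : LocallyLipschitz g)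
    (V : (Fin n → ℝ) → ℝ)
    (hV_smooth : ContDiff ℝ 1 V)
    (hV0 : V 0 = 0)
    (hVpos : ∀ x : Fin n → ℝ, x ≠ 0 → 0 < V x)
    (hVrad : ∀ M : ℝ, ∃ r : ℝ, ∀ x : Fin n → ℝ, r ≤ ‖x‖ → M ≤ V x)
    (W : (Fin n → ℝ) → ℝ)
    (hW_cont : Continuous W)
    (hW0 : W 0 = 0)
    (hWpos : ∀ x : Fin n → ℝ, x ≠ 0 → 0 < W x)
    (ρ₀ : ℝ) (hρ₀ : 0 < ρ₀)
    (u : ℝ → (Fin m → ℝ)) (hu : Continuous u)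
    (x : ℝ → (Fin n → ℝ))
    (hx : ∀ t : ℝ, 0 ≤ t →
      HasDerivAt x (f (x t) + g (x t) *ᵥ u t) t)
    (hCLF : ∀ t : ℝ, 0 ≤ t →
      fderiv ℝ V (x t) (f (x t) + g (x t) *ᵥ u t) ≤ -ρ₀ * W (x t)) :
    Tendsto x atTop (nhds 0) := by
  have hVc : Continuous V := hV_smooth.continuous
  have hVd : ∀ y, HasFDerivAt V (fderiv ℝ V y) y := fun y =>
    ((hV_smooth.differentiable (by norm_num)) y).hasFDerivAt
  have hWnn : ∀ y, 0 ≤ W y := by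
    intro y
    by_cases h : y = 0
    · rw [h, hW0]
    · exact (hWpos y h).le
  have hd : ∀ t : ℝ, 0 ≤ t → HasDerivAt (fun s => V (x s))
      (fderiv ℝ V (x t) (f (x t) + g (x t) *ᵥ u t)) t := fun t ht =>
    (hVd (x t)).comp_hasDerivAt t (hx t ht)
  have key : ∀ c : ℝ, (∀ t, 0 ≤ t → c ≤ W (x t)) →
      AntitoneOn (fun s => V (x s) + ρ₀ * c * s) (Set.Ici 0) := by
    intro c hc
    have hd2 : ∀ t : ℝ, 0 ≤ t → HasDerivAt (fun s => V (x s) + ρ₀ * c * s)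
        (fderiv ℝ V (x t) (f (x t) + g (x t) *ᵥ u t) + ρ₀ * c * 1) t := fun t ht =>
      (hd t ht).add ((hasDerivAt_id t).const_mul (ρ₀ * c))
    apply antitoneOn_of_deriv_nonpos (convex_Ici 0)
    · intro t ht
      exact (hd2 t ht).continuousAt.continuousWithinAt
    · intro t ht
      rw [interior_Ici] at ht
      exact (hd2 t (le_of_lt ht)).differentiableAt.differentiableWithinAt
    · intro t ht
      rw [interior_Ici] at ht
      have ht' : 0 ≤ t := le_of_lt ht
      rw [(hd2 t ht').deriv]
      have h1 := hCLF t ht'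
      have h2 := mul_le_mul_of_nonneg_left (hc t ht') hρ₀.le
      linarith
  have hanti : ∀ s t : ℝ, 0 ≤ s → s ≤ t → V (x t) ≤ V (x s) := by
    intro s t hs hst
    have := key 0 (fun t _ => hWnn _) (Set.mem_Ici.2 hs) (Set.mem_Ici.2 (hs.trans hst)) hst
    simpa using this
  have step1 : ∀ ε : ℝ, 0 < ε → ∃ T : ℝ, 0 ≤ T ∧ V (x T) < ε := by
    intro ε hε
    by_contra! hcon
    obtain ⟨r, hr⟩ := hVrad (V (x 0) + 1)
    have hK : IsCompact (Metric.closedBall (0 : Fin n → ℝ) r ∩ {y | ε ≤ V y}) :=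
      (isCompact_closedBall _ _).inter_right (isClosed_le continuous_const hVc)
    obtain ⟨c, hc0, hc⟩ := hK.exists_forall_le' (f := W) (a := 0) hW_cont.continuousOn (by
      rintro y ⟨-, hy⟩
      apply hWpos
      rintro rfl
      have hy' : ε ≤ V 0 := hy
      linarith)
    have hcW : ∀ t, 0 ≤ t → c ≤ W (x t) := by
      intro t ht
      refine hc _ ⟨?_, hcon t ht⟩
      rw [mem_closedBall_zero_iff]
      by_contra! h
      have h1 := hr _ h.le
      have h2 := hanti 0 t le_rfl ht
      linarith
    have hρc : 0 < ρ₀ * c := mul_pos hρ₀ hc0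
    have hV0' : ε ≤ V (x 0) := hcon 0 le_rfl
    have hT : 0 ≤ V (x 0) / (ρ₀ * c) := div_nonneg (by linarith) hρc.le
    have h1 : V (x (V (x 0) / (ρ₀ * c))) + ρ₀ * c * (V (x 0) / (ρ₀ * c))
        ≤ V (x 0) + ρ₀ * c * 0 :=
      key c hcW (Set.mem_Ici.2 le_rfl) (Set.mem_Ici.2 hT) hT
    rw [mul_div_cancel₀ _ hρc.ne'] at h1
    have h2 := hcon _ hT
    linarith
  rw [Metric.tendsto_atTop]
  intro η hη
  obtain ⟨r, hr⟩ := hVrad 1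
  have hK : IsCompact (Metric.closedBall (0 : Fin n → ℝ) r ∩ {y | η ≤ ‖y‖}) :=
    (isCompact_closedBall _ _).inter_right (isClosed_le continuous_const continuous_norm)
  obtain ⟨c, hc0, hc⟩ := hK.exists_forall_le' (f := V) (a := 0) hVc.continuousOn (by
    rintro y ⟨-, hy⟩
    apply hVpos
    rintro rfl
    have hy' : η ≤ ‖(0 : Fin n → ℝ)‖ := hy
    rw [norm_zero] at hy'
    linarith)
  obtain ⟨T, hT0, hT⟩ := step1 (min c 1) (lt_min hc0 one_pos)
  refine ⟨T, fun t ht => ?_⟩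
  rw [dist_zero_right]
  by_contra! h
  have h1 := hanti T t hT0 ht
  have h2 := hT.trans_le (min_le_left _ _)
  have h3 := hT.trans_le (min_le_right _ _)
  rcases le_total r ‖x t‖ with h4 | h4
  · have := hr _ h4
    linarith
  · have := hc (x t) ⟨mem_closedBall_zero_iff.2 h4, h⟩
    linarith
end
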